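/- arXiv:1303.1421 — 4 statements merged into one kernel-verified Lean document; each statement's English description precedes it below -/
import Mathlib

section
/- Let Ω ⊆ ℝⁿ be open, let f : Ω → ℝ be continuous, let α : Ω → ℝ be continuous, and let p ∈ Ω. If f satisfies Δf ≤ α at p in the barrier sense, then f satisfies Δf ≤ α at p in the viscosity sense. -/
open Finset

/-- Second partial derivative `∂_j ∂_i h` at `p`: the `(i,j)` entry of the Hessian matrix. -/
noncomputable def hess2 {n : ℕ} (h : (Fin n → ℝ) → ℝ) (p : Fin n → ℝ) (i j : Fin n) : ℝ :=
  fderiv ℝ (fun x => fderiv ℝ h x (Pi.single i 1)) p (Pi.single j 1)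

/-- The Laplacian of `h` at `p`: the trace of the Hessian matrix. -/
noncomputable def lapl {n : ℕ} (h : (Fin n → ℝ) → ℝ) (p : Fin n → ℝ) : ℝ :=
  ∑ i, hess2 h p i i

open Filter Topology

/-! If `h` touches `f` from below at `p` and the barrier `k` touches it from above, then `k - h` has
a local minimum at `p`, so its Hessian is positive semidefinite there and
`Δh(p) ≤ Δk(p) ≤ α(p) + ε`.
-/

theorem deriv_deriv_nonneg_of_isLocalMin {φ : ℝ → ℝ} {t : ℝ} (hmin : IsLocalMin φ t)
    (hφ : ContinuousAt φ t) : 0 ≤ deriv (deriv φ) t := by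
  by_contra! hneg
  -- By the second derivative test `t` is also a local maximum, so `φ` is constant near `t`.
  have hmax : IsLocalMax φ t := isLocalMax_of_deriv_deriv_neg hneg hmin.deriv_eq_zero hφ
  have hconst : φ =ᶠ[𝓝 t] fun _ => φ t := by
    filter_upwards [hmin, hmax] with s hge hle using le_antisymm hle hge
  have hzero : deriv (deriv φ) t = 0 := by simpa using hconst.deriv.deriv_eq
  exact hneg.ne hzero

section SecondDerivative

variable {𝕜 E F : Type*} [NontriviallyNormedField 𝕜] [NormedAddCommGroup E] [NormedSpace 𝕜 E]
  [NormedAddCommGroup F] [NormedSpace 𝕜 F]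

theorem eventually_differentiableAt_of_contDiffAt_two {g : E → F} {p : E}
    (hg : ContDiffAt 𝕜 2 g p) : ∀ᶠ x in 𝓝 p, DifferentiableAt 𝕜 g x :=
  (hg.eventually (by simp)).mono fun _ hx => hx.differentiableAt (by simp)

theorem differentiableAt_fderiv_of_contDiffAt_two {g : E → F} {p : E}
    (hg : ContDiffAt 𝕜 2 g p) : DifferentiableAt 𝕜 (fderiv 𝕜 g) p :=
  (hg.fderiv_right (m := 1) (by norm_num)).differentiableAt (by simp)

theorem fderiv_fderiv_sub {g₁ g₂ : E → F} {p : E} (hg₁ : ContDiffAt 𝕜 2 g₁ p)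
    (hg₂ : ContDiffAt 𝕜 2 g₂ p) :
    fderiv 𝕜 (fderiv 𝕜 (g₁ - g₂)) p = fderiv 𝕜 (fderiv 𝕜 g₁) p - fderiv 𝕜 (fderiv 𝕜 g₂) p := by
  have hsub : fderiv 𝕜 (g₁ - g₂) =ᶠ[𝓝 p] fderiv 𝕜 g₁ - fderiv 𝕜 g₂ := by
    filter_upwards [eventually_differentiableAt_of_contDiffAt_two hg₁,
      eventually_differentiableAt_of_contDiffAt_two hg₂] with x hx₁ hx₂ using fderiv_sub hx₁ hx₂
  rw [hsub.fderiv_eq, fderiv_sub (differentiableAt_fderiv_of_contDiffAt_two hg₁)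
    (differentiableAt_fderiv_of_contDiffAt_two hg₂)]

theorem deriv_deriv_comp_add_smul {g : E → F} {p : E} (hg : ContDiffAt 𝕜 2 g p) (v : E) :
    deriv (deriv fun t : 𝕜 => g (p + t • v)) 0 = fderiv 𝕜 (fderiv 𝕜 g) p v v := by
  have hline (t : 𝕜) : HasDerivAt (fun s : 𝕜 => p + s • v) v t := by
    simpa using ((hasDerivAt_id t).smul_const v).const_add p
  have hlim : Tendsto (fun t : 𝕜 => p + t • v) (𝓝 0) (𝓝 p) := by
    simpa using (hline 0).continuousAt.tendsto
  have hfirst : deriv (fun t : 𝕜 => g (p + t • v)) =ᶠ[𝓝 0] fun t => fderiv 𝕜 g (p + t • v) v := by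
    filter_upwards [hlim.eventually (eventually_differentiableAt_of_contDiffAt_two hg)] with t ht
    exact (ht.hasFDerivAt.comp_hasDerivAt t (hline t)).deriv
  have hsecond : HasDerivAt (fun t : 𝕜 => fderiv 𝕜 g (p + t • v)) (fderiv 𝕜 (fderiv 𝕜 g) p v) 0 :=
    (differentiableAt_fderiv_of_contDiffAt_two hg).hasFDerivAt.comp_hasDerivAt_of_eq 0 (hline 0)
      (by simp)
  rw [hfirst.deriv_eq]
  simpa using (hsecond.clm_apply (hasDerivAt_const 0 v)).deriv

end SecondDerivative

section SecondOrderComparison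

variable {E : Type*} [NormedAddCommGroup E] [NormedSpace ℝ E]

theorem fderiv_fderiv_apply_self_nonneg_of_isLocalMin {g : E → ℝ} {p : E}
    (hg : ContDiffAt ℝ 2 g p) (hmin : IsLocalMin g p) (v : E) :
    0 ≤ fderiv ℝ (fderiv ℝ g) p v v := by
  have hline : ContinuousAt (fun t : ℝ => p + t • v) 0 := by fun_prop
  have hp : p + (0 : ℝ) • v = p := by simp
  have hmin_line : IsLocalMin (fun t : ℝ => g (p + t • v)) 0 := by
    have hmin_zero : IsLocalMin g (p + (0 : ℝ) • v) := by rwa [hp]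
    exact hline.eventually hmin_zero
  rw [← deriv_deriv_comp_add_smul hg v]
  exact deriv_deriv_nonneg_of_isLocalMin hmin_line (hg.continuousAt.comp_of_eq hline hp)

theorem fderiv_fderiv_apply_self_le_of_eventuallyLE {h k : E → ℝ} {p : E}
    (hh : ContDiffAt ℝ 2 h p) (hk : ContDiffAt ℝ 2 k p) (hle : h ≤ᶠ[𝓝 p] k) (heq : h p = k p)
    (v : E) : fderiv ℝ (fderiv ℝ h) p v v ≤ fderiv ℝ (fderiv ℝ k) p v v := by
  have hmin : IsLocalMin (k - h) p := by
    filter_upwards [hle] with x hx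
    simpa [heq] using hx
  have hnonneg : 0 ≤ fderiv ℝ (fderiv ℝ (k - h)) p v v :=
    fderiv_fderiv_apply_self_nonneg_of_isLocalMin (hk.sub hh) hmin v
  rw [fderiv_fderiv_sub hk hh] at hnonneg
  exact sub_nonneg.mp hnonneg

end SecondOrderComparison

section Laplacian

variable {n : ℕ} {h k f : (Fin n → ℝ) → ℝ} {p : Fin n → ℝ} {a : ℝ}

theorem hess2_eq_fderiv_fderiv (hh : DifferentiableAt ℝ (fderiv ℝ h) p) (i j : Fin n) :
    hess2 h p i j = fderiv ℝ (fderiv ℝ h) p (Pi.single j 1) (Pi.single i 1) := by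
  simp [hess2, fderiv_clm_apply hh (differentiableAt_const _)]

theorem lapl_le_of_eventuallyLE (hh : ContDiffAt ℝ 2 h p) (hk : ContDiffAt ℝ 2 k p)
    (hle : h ≤ᶠ[𝓝 p] k) (heq : h p = k p) : lapl h p ≤ lapl k p := by
  refine Finset.sum_le_sum fun i _ => ?_
  rw [hess2_eq_fderiv_fderiv (differentiableAt_fderiv_of_contDiffAt_two hh),
    hess2_eq_fderiv_fderiv (differentiableAt_fderiv_of_contDiffAt_two hk)]
  exact fderiv_fderiv_apply_self_le_of_eventuallyLE hh hk hle heq _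

/-- `Δf ≤ a` at `p` in the barrier sense. Being `C²` and lying above `f` are imposed on germs at
`p`, which is the same as imposing them on some neighborhood of `p`. -/
def BarrierLaplLE (f : (Fin n → ℝ) → ℝ) (p : Fin n → ℝ) (a : ℝ) : Prop :=
  ∀ ε > 0, ∃ k, ContDiffAt ℝ 2 k p ∧ k p = f p ∧ f ≤ᶠ[𝓝 p] k ∧ lapl k p ≤ a + ε

/-- `Δf ≤ a` at `p` in the viscosity sense, with test functions taken as germs at `p` as in
`BarrierLaplLE`. -/
def ViscosityLaplLE (f : (Fin n → ℝ) → ℝ) (p : Fin n → ℝ) (a : ℝ) : Prop :=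
  ∀ h, ContDiffAt ℝ 2 h p → h p = f p → h ≤ᶠ[𝓝 p] f → lapl h p ≤ a

theorem barrier_implies_viscosity_laplacian_general (hbarrier : BarrierLaplLE f p a) :
    ViscosityLaplLE f p a := by
  intro h hh hhp hhf
  refine le_of_forall_pos_le_add fun ε hε => ?_
  obtain ⟨k, hk, hkp, hfk, hlapl⟩ := hbarrier ε hε
  calc lapl h p ≤ lapl k p := lapl_le_of_eventuallyLE hh hk (hhf.trans hfk) (hhp.trans hkp.symm)
    _ ≤ a + ε := hlapl

end Laplacian

/-- Barrier sense implies viscosity sense for the inequality `Δ f ≤ α` at a point `p`. -/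
theorem barrier_implies_viscosity_laplacian {n : ℕ}
    (Ω : Set (Fin n → ℝ)) (hΩ : IsOpen Ω)
    (f : (Fin n → ℝ) → ℝ) (hf : ContinuousOn f Ω)
    (α : (Fin n → ℝ) → ℝ) (hα : ContinuousOn α Ω)
    (p : Fin n → ℝ) (hp : p ∈ Ω)
    (hbarrier : ∀ ε : ℝ, 0 < ε → ∃ (U : Set (Fin n → ℝ)) (h : (Fin n → ℝ) → ℝ),
      IsOpen U ∧ p ∈ U ∧ U ⊆ Ω ∧ ContDiffOn ℝ 2 h U ∧ h p = f p ∧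
      (∀ x ∈ U, f x ≤ h x) ∧ lapl h p ≤ α p + ε) :
    ∀ (U : Set (Fin n → ℝ)) (h : (Fin n → ℝ) → ℝ),
      IsOpen U → p ∈ U → U ⊆ Ω → ContDiffOn ℝ 2 h U → h p = f p →
      (∀ x ∈ U, h x ≤ f x) → lapl h p ≤ α p := by
  intro U h hU hpU _ hh hhp hhf
  have hbarrier_germ : BarrierLaplLE f p (α p) := fun ε hε =>
    let ⟨_, k, hV, hpV, _, hk, hkp, hfk, hlapl⟩ := hbarrier ε hε
    ⟨k, hk.contDiffAt (hV.mem_nhds hpV), hkp, eventually_of_mem (hV.mem_nhds hpV) hfk, hlapl⟩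
  exact barrier_implies_viscosity_laplacian_general hbarrier_germ h
    (hh.contDiffAt (hU.mem_nhds hpU)) hhp (eventually_of_mem (hU.mem_nhds hpU) hhf)
end

section
/- Let f : ℝ → ℝ be defined by f(x) = x²·sin(1/x) for x ≠ 0 and f(0) = 0. Then every C² function h defined on a neighborhood U of 0 with h(0) = 0 and h ≥ f on U satisfies h''(0) ≥ 2. In particular, f does not satisfy f''(0) ≤ 0 in the barrier sense: there exists ε > 0 (e.g. ε = 1) such that there is no neighborhood U of 0 and C² function h : U → ℝ with h(0) = f(0), h ≥ f on U and h''(0) ≤ 0 + ε. -/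
/-!
Since `f(x) = O(x²)`, `f'(0) = 0`, and a function touching `f` from above at `0` has the same first
derivative there, so `h(x) = h''(0) / 2 * x² + o(x²)`. At the points accumulating at `0` where
`sin (1 / x) = 1`, the inequality `f ≤ h` reads `x² ≤ h(x)`; dividing by `x²` and letting `x → 0`
gives `1 ≤ h''(0) / 2`.
-/

open Filter Asymptotics
open scoped Topology

theorem tendsto_sub_sub_div_sq_of_hasDerivAt {f f' : ℝ → ℝ} {f'' a : ℝ}
    (hf : ∀ᶠ x in 𝓝 a, HasDerivAt f (f' x) x) (hf' : HasDerivAt f' f'' a) :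
    Tendsto (fun x ↦ (f x - f a - f' a * (x - a)) / (x - a) ^ 2) (𝓝[≠] a) (𝓝 (f'' / 2)) := by
  have hnum : ∀ᶠ x in 𝓝 a,
      HasDerivAt (fun x ↦ f x - f a - f' a * (x - a)) (f' x - f' a) x := by
    filter_upwards [hf] with x hx
    simpa using (hx.sub_const (f a)).fun_sub (((hasDerivAt_id x).sub_const a).const_mul (f' a))
  have hden (x : ℝ) : HasDerivAt (fun x ↦ (x - a) ^ 2) (2 * (x - a)) x := by
    simpa using ((hasDerivAt_id x).sub_const a).fun_pow 2
  have hslope : Tendsto (fun x ↦ (f' x - f' a) / (2 * (x - a))) (𝓝[≠] a) (𝓝 (f'' / 2)) := by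
    refine (hf'.tendsto_slope.div_const 2).congr fun x ↦ ?_
    rw [slope_def_field, div_div, mul_comm]
  refine HasDerivAt.lhopital_zero_nhdsNE (hnum.filter_mono nhdsWithin_le_nhds)
    (.of_forall hden) ?_ ?_ ?_ hslope
  · filter_upwards [self_mem_nhdsWithin] with x hx
    exact mul_ne_zero two_ne_zero (sub_ne_zero.2 hx)
  · simpa using hnum.self_of_nhds.continuousAt.tendsto.mono_left nhdsWithin_le_nhds
  · simpa using (hden a).continuousAt.tendsto.mono_left nhdsWithin_le_nhds

theorem eq_of_hasDerivAt_of_eventuallyLE {f g : ℝ → ℝ} {f' g' a : ℝ} (hf : HasDerivAt f f' a)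
    (hg : HasDerivAt g g' a) (hle : f ≤ᶠ[𝓝 a] g) (heq : f a = g a) : f' = g' := by
  have hmin : IsLocalMin (g - f) a := by
    filter_upwards [hle] with x hx
    simpa [heq] using hx
  exact (sub_eq_zero.1 (hmin.hasDerivAt_eq_zero (hg.sub hf))).symm

theorem two_mul_le_of_eventuallyLE_of_frequently_le {f h h' : ℝ → ℝ} {f' h'' a m : ℝ}
    (hf : HasDerivAt f f' a) (hfm : ∃ᶠ x in 𝓝[≠] a, f a + f' * (x - a) + m * (x - a) ^ 2 ≤ f x)
    (hh : ∀ᶠ x in 𝓝 a, HasDerivAt h (h' x) x) (hh' : HasDerivAt h' h'' a)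
    (hle : f ≤ᶠ[𝓝 a] h) (heq : f a = h a) : 2 * m ≤ h'' := by
  have hderiv : f' = h' a := eq_of_hasDerivAt_of_eventuallyLE hf hh.self_of_nhds hle heq
  have hfreq : ∃ᶠ x in 𝓝[≠] a, m ≤ (h x - h a - h' a * (x - a)) / (x - a) ^ 2 := by
    have hle' : ∀ᶠ x in 𝓝[≠] a, f x ≤ h x := hle.filter_mono nhdsWithin_le_nhds
    refine (hfm.and_eventually (hle'.and self_mem_nhdsWithin)).mono ?_
    rintro x ⟨hmx, hfx, hxa⟩
    rw [le_div_iff₀ (sq_pos_of_ne_zero (sub_ne_zero.2 hxa)), ← hderiv, ← heq]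
    linarith
  have hm : m ≤ h'' / 2 :=
    ge_of_tendsto_of_frequently (tendsto_sub_sub_div_sq_of_hasDerivAt hh hh') hfreq
  linarith

theorem hasDerivAt_sq_mul_zero_of_isBigO_one {𝕜 : Type*} [NontriviallyNormedField 𝕜] {g : 𝕜 → 𝕜}
    (hg : g =O[𝓝 0] fun _ ↦ (1 : ℝ)) : HasDerivAt (fun x ↦ x ^ 2 * g x) 0 0 := by
  have hO : (fun x ↦ x ^ 2 * g x) =O[𝓝 0] fun x ↦ ‖x - 0‖ ^ 2 := by
    simpa using ((isBigO_refl (fun x : 𝕜 ↦ x) (𝓝 0)).norm_right.pow 2).mul hg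
  simpa using (hO.hasFDerivAt one_lt_two).hasDerivAt

theorem frequently_atTop_eq_of_periodic {α β : Type*} [AddCommGroup α] [LinearOrder α]
    [IsOrderedAddMonoid α] [Archimedean α] {g : α → β} {c : α} (hg : Function.Periodic g c)
    (hc : 0 < c) (x : α) : ∃ᶠ y in atTop, g y = g x := by
  refine frequently_atTop.2 fun b ↦ ?_
  obtain ⟨y, hy, hxy⟩ := hg.exists_mem_Ico hc x b
  exact ⟨y, hy.1, hxy.symm⟩

theorem frequently_sin_one_div_eq_one : ∃ᶠ x in 𝓝[>] (0 : ℝ), Real.sin (1 / x) = 1 := by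
  have hsin : ∃ᶠ y in atTop, Real.sin y = 1 := by
    simpa using frequently_atTop_eq_of_periodic Real.sin_periodic Real.two_pi_pos (Real.pi / 2)
  exact tendsto_inv_atTop_nhdsGT_zero.frequently (hsin.mono fun y hy ↦ by simpa using hy)

section

variable {𝕜 F : Type*} [NontriviallyNormedField 𝕜] [NormedAddCommGroup F] [NormedSpace 𝕜 F]
  {h : 𝕜 → F} {a : 𝕜}

theorem eventually_hasDerivAt_deriv_of_contDiffAt_one (hh : ContDiffAt 𝕜 1 h a) :
    ∀ᶠ x in 𝓝 a, HasDerivAt h (deriv h x) x :=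
  (hh.eventually (by simp)).mono fun _ hx ↦ hx.differentiableAt_one.hasDerivAt

theorem hasDerivAt_deriv_of_contDiffAt_two (hh : ContDiffAt 𝕜 2 h a) :
    HasDerivAt (deriv h) (deriv (deriv h) a) a :=
  (hh.derivWithin one_add_one_eq_two.le).differentiableAt_one.hasDerivAt

end

theorem not_barrier_second_deriv_nonpos_of_x_sq_sin_inv_general {f h h' : ℝ → ℝ} {h'' : ℝ}
    (hf : ∀ x : ℝ, f x = if x = 0 then 0 else x ^ 2 * Real.sin (1 / x))
    (hh : ∀ᶠ x in 𝓝 0, HasDerivAt h (h' x) x) (hh' : HasDerivAt h' h'' 0)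
    (h0 : h 0 = 0) (hle : f ≤ᶠ[𝓝 0] h) : 2 ≤ h'' := by
  have hf_eq (x : ℝ) : f x = x ^ 2 * Real.sin (1 / x) := by
    rw [hf]
    split_ifs with hx <;> simp [hx]
  have hf0 : f 0 = 0 := by simp [hf_eq]
  have hbounded : (fun x : ℝ ↦ Real.sin (1 / x)) =O[𝓝 0] fun _ ↦ (1 : ℝ) :=
    .of_bound 1 (.of_forall fun x ↦ by simpa using Real.abs_sin_le_one x⁻¹)
  have hderiv : HasDerivAt f 0 0 := funext hf_eq ▸ hasDerivAt_sq_mul_zero_of_isBigO_one hbounded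
  have hfreq : ∃ᶠ x in 𝓝[≠] 0, f 0 + 0 * (x - 0) + 1 * (x - 0) ^ 2 ≤ f x := by
    refine (frequently_sin_one_div_eq_one.filter_mono (nhdsGT_le_nhdsNE 0)).mono fun x hx ↦ ?_
    rw [hf0, hf_eq, hx]
    simp
  simpa using
    two_mul_le_of_eventuallyLE_of_frequently_le hderiv hfreq hh hh' hle (hf0.trans h0.symm)

/-- For `f(x) = x² sin(1/x)` (with `f(0) = 0`), every `C²` upper barrier `h` at `0`
(i.e. `h 0 = 0` and `h ≥ f` on a neighborhood of `0`) satisfies `h''(0) ≥ 2`.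
In particular, `f` does not satisfy `f''(0) ≤ 0` in the barrier sense: for `ε = 1`
there is no neighborhood `U` of `0` and `C²` function `h : U → ℝ` with `h 0 = f 0`,
`h ≥ f` on `U` and `h''(0) ≤ 0 + 1`. -/
theorem not_barrier_second_deriv_nonpos_of_x_sq_sin_inv
    (f : ℝ → ℝ)
    (hf : ∀ x : ℝ, f x = if x = 0 then 0 else x ^ 2 * Real.sin (1 / x)) :
    (∀ (U : Set ℝ) (h : ℝ → ℝ), IsOpen U → (0 : ℝ) ∈ U → ContDiffOn ℝ 2 h U →
      h 0 = 0 → (∀ x ∈ U, f x ≤ h x) → 2 ≤ deriv (deriv h) 0) ∧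
    ∃ ε : ℝ, 0 < ε ∧ ε = 1 ∧
      ¬ ∃ (U : Set ℝ) (h : ℝ → ℝ), IsOpen U ∧ (0 : ℝ) ∈ U ∧ ContDiffOn ℝ 2 h U ∧
        h 0 = f 0 ∧ (∀ x ∈ U, f x ≤ h x) ∧ deriv (deriv h) 0 ≤ 0 + ε := by
  have two_le (U : Set ℝ) (h : ℝ → ℝ) (hU : IsOpen U) (h0U : (0 : ℝ) ∈ U)
      (hC2 : ContDiffOn ℝ 2 h U) (h0 : h 0 = 0) (hle : ∀ x ∈ U, f x ≤ h x) :
      2 ≤ deriv (deriv h) 0 := by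
    have hU0 : U ∈ 𝓝 0 := hU.mem_nhds h0U
    have hC2' : ContDiffAt ℝ 2 h 0 := hC2.contDiffAt hU0
    exact not_barrier_second_deriv_nonpos_of_x_sq_sin_inv_general hf
      (eventually_hasDerivAt_deriv_of_contDiffAt_one (hC2'.of_le one_le_two))
      (hasDerivAt_deriv_of_contDiffAt_two hC2') h0 (eventually_of_mem hU0 hle)
  refine ⟨two_le, 1, one_pos, rfl, ?_⟩
  rintro ⟨U, h, hU, h0U, hC2, h0, hle, hle_one⟩
  have hge_two := two_le U h hU h0U hC2 (by simpa [hf] using h0) hle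
  linarith
end

section
/- Let Ω ⊆ ℝⁿ be open, let f : Ω → ℝ be continuous, and let α : Ω → ℝ be smooth. If f satisfies Δf ≤ α on Ω in the distributional sense, then f satisfies Δf ≤ α at every point of Ω in the viscosity sense. -/
open Finset

/-!
Mollifying `f` yields `C²` functions `g` that are uniformly close to `f` on a compact
neighbourhood of `p` and satisfy `Δ g ≤ α + ε` there, because `Δ (ρ ⋆ f) x` is the distributional
Laplacian of `f` tested against the translated mollifier `ρ (x - ·)`. If `h` touches `f` from below
at `p`, then `g - h + ε |· - p|²` has a local minimum close to `p`: on a small sphere the quadratic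
term outweighs the error `g - f`. At this minimum the Laplacian is nonnegative, so
`Δ h ≤ α + O(ε)` there, and letting the point tend to `p` and `ε` to `0` gives `Δ h p ≤ α p`.
-/

open MeasureTheory Metric Filter Topology Set
open ContinuousLinearMap (lsmul)
open scoped Convolution

/-- The inequality `Δ f ≤ α` on `Ω` in the distributional sense, tested against nonnegative
smooth functions compactly supported in `Ω`. -/
def DistributionalLaplLE {n : ℕ} (Ω : Set (Fin n → ℝ)) (f α : (Fin n → ℝ) → ℝ) : Prop :=
  ∀ φ : (Fin n → ℝ) → ℝ, ContDiff ℝ (⊤ : ℕ∞) φ → HasCompactSupport φ →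
    tsupport φ ⊆ Ω → (∀ x, 0 ≤ φ x) →
    ∫ x in Ω, f x * lapl φ x ≤ ∫ x in Ω, α x * φ x

/-- The inequality `Δ f ≤ α` at `p` in the viscosity sense, tested against `C²` functions touching
`f` from below at `p` on an open neighbourhood of `p` contained in `Ω`. -/
def ViscosityLaplLEAt {n : ℕ} (Ω : Set (Fin n → ℝ)) (f α : (Fin n → ℝ) → ℝ) (p : Fin n → ℝ) :
    Prop :=
  ∀ (U : Set (Fin n → ℝ)) (h : (Fin n → ℝ) → ℝ),
    IsOpen U → p ∈ U → U ⊆ Ω → ContDiffOn ℝ 2 h U → h p = f p →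
    (∀ x ∈ U, h x ≤ f x) → lapl h p ≤ α p

section SecondDerivativeTest

theorem deriv_deriv_nonneg_of_isLocalMin_s5 {g : ℝ → ℝ} {a : ℝ} (hg : ContinuousAt g a)
    (hmin : IsLocalMin g a) : 0 ≤ deriv (deriv g) a := by
  by_contra! hneg
  have hmax : IsLocalMax g a := isLocalMax_of_deriv_deriv_neg hneg hmin.deriv_eq_zero hg
  have hconst : g =ᶠ[𝓝 a] fun _ => g a := by
    filter_upwards [hmin, hmax] with t hge hle using le_antisymm hle hge
  have hzero : deriv (deriv g) a = 0 := by simp [hconst.deriv.deriv_eq]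
  exact hneg.ne hzero

variable {E F : Type*} [NormedAddCommGroup E] [NormedSpace ℝ E]
  [NormedAddCommGroup F] [NormedSpace ℝ F]

theorem differentiableAt_fderiv_apply_of_contDiffAt {u : E → F} {x : E}
    (hu : ContDiffAt ℝ 2 u x) (v : E) : DifferentiableAt ℝ (fun y => fderiv ℝ u y v) x :=
  ((hu.fderiv_right (m := 1) (by norm_num)).differentiableAt one_ne_zero).clm_apply
    (differentiableAt_const v)

theorem deriv_deriv_comp_line {u : E → F} {x : E} (hu : ContDiffAt ℝ 2 u x) (v : E) :
    deriv (deriv fun t : ℝ => u (x + t • v)) 0 = fderiv ℝ (fun y => fderiv ℝ u y v) x v := by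
  have hline (t : ℝ) : HasDerivAt (fun s : ℝ => x + s • v) v t := by
    simpa using ((hasDerivAt_id t).smul_const v).const_add x
  have hline_tendsto : Tendsto (fun t : ℝ => x + t • v) (𝓝 0) (𝓝 x) := by
    simpa using (hline 0).continuousAt.tendsto
  have hdiff : ∀ᶠ y in 𝓝 x, DifferentiableAt ℝ u y :=
    (hu.eventually (by simp)).mono fun y hy => hy.differentiableAt two_ne_zero
  have hderiv : deriv (fun t : ℝ => u (x + t • v)) =ᶠ[𝓝 0] fun t => fderiv ℝ u (x + t • v) v :=
    (hline_tendsto.eventually hdiff).mono fun t ht =>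
      (ht.hasFDerivAt.comp_hasDerivAt t (hline t)).deriv
  have hfderiv : DifferentiableAt ℝ (fun y => fderiv ℝ u y v) (x + (0 : ℝ) • v) := by
    simpa using differentiableAt_fderiv_apply_of_contDiffAt hu v
  rw [hderiv.deriv_eq]
  simpa [Function.comp_def] using (hfderiv.hasFDerivAt.comp_hasDerivAt 0 (hline 0)).deriv

theorem fderiv_fderiv_apply_nonneg_of_isLocalMin {u : E → ℝ} {x : E} (hu : ContDiffAt ℝ 2 u x)
    (hmin : IsLocalMin u x) (v : E) : 0 ≤ fderiv ℝ (fun y => fderiv ℝ u y v) x v := by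
  have hline : ContinuousAt (fun t : ℝ => x + t • v) 0 := by fun_prop
  have hline_tendsto : Tendsto (fun t : ℝ => x + t • v) (𝓝 0) (𝓝 x) := by
    simpa using hline.tendsto
  have hmin_line : IsLocalMin (fun t : ℝ => u (x + t • v)) 0 := by
    filter_upwards [hline_tendsto.eventually hmin] with t ht
    simpa using ht
  rw [← deriv_deriv_comp_line hu v]
  exact deriv_deriv_nonneg_of_isLocalMin_s5
    (hu.continuousAt.comp_of_eq hline (by simp)) hmin_line

end SecondDerivativeTest

section Laplacian

variable {n : ℕ} {u v : (Fin n → ℝ) → ℝ} {x : Fin n → ℝ}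

theorem hess2_eq_iteratedFDeriv (hu : ContDiffAt ℝ 2 u x) (i j : Fin n) :
    hess2 u x i j = iteratedFDeriv ℝ 2 u x ![Pi.single j 1, Pi.single i 1] := by
  have hfderiv : DifferentiableAt ℝ (fderiv ℝ u) x :=
    (hu.fderiv_right (m := 1) (by norm_num)).differentiableAt one_ne_zero
  simp [hess2, iteratedFDeriv_two_apply, fderiv_clm_apply hfderiv (differentiableAt_const _)]

theorem lapl_eq_sum_iteratedFDeriv (hu : ContDiffAt ℝ 2 u x) :
    lapl u x = ∑ i, iteratedFDeriv ℝ 2 u x ![Pi.single i 1, Pi.single i 1] :=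
  Finset.sum_congr rfl fun i _ => hess2_eq_iteratedFDeriv hu i i

theorem lapl_add (hu : ContDiffAt ℝ 2 u x) (hv : ContDiffAt ℝ 2 v x) :
    lapl (fun y => u y + v y) x = lapl u x + lapl v x := by
  simp only [lapl_eq_sum_iteratedFDeriv (hu.add hv), lapl_eq_sum_iteratedFDeriv hu,
    lapl_eq_sum_iteratedFDeriv hv, fun_iteratedFDeriv_add_apply hu hv,
    add_apply, Finset.sum_add_distrib]

theorem lapl_sub (hu : ContDiffAt ℝ 2 u x) (hv : ContDiffAt ℝ 2 v x) :
    lapl (fun y => u y - v y) x = lapl u x - lapl v x := by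
  simp only [lapl_eq_sum_iteratedFDeriv (hu.sub hv), lapl_eq_sum_iteratedFDeriv hu,
    lapl_eq_sum_iteratedFDeriv hv, fun_iteratedFDeriv_sub_apply hu hv,
    sub_apply, Finset.sum_sub_distrib]

theorem lapl_const_mul (c : ℝ) (hu : ContDiffAt ℝ 2 u x) :
    lapl (fun y => c * u y) x = c * lapl u x := by
  simp only [← smul_eq_mul, lapl_eq_sum_iteratedFDeriv (hu.const_smul c),
    lapl_eq_sum_iteratedFDeriv hu, iteratedFDeriv_const_smul_apply' hu,
    smul_apply, Finset.smul_sum]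

theorem continuousAt_hess2 (hu : ContDiffAt ℝ 2 u x) (i j : Fin n) :
    ContinuousAt (fun y => hess2 u y i j) x := by
  have hpartial : ContDiffAt ℝ 1 (fun y => fderiv ℝ u y (Pi.single i 1)) x :=
    (hu.fderiv_right (by norm_num)).clm_apply contDiffAt_const
  exact ((hpartial.fderiv_right (m := 0) (by norm_num)).clm_apply contDiffAt_const).continuousAt

theorem continuousAt_lapl (hu : ContDiffAt ℝ 2 u x) : ContinuousAt (lapl u) x :=
  tendsto_finsetSum _ fun i _ => continuousAt_hess2 hu i i

theorem lapl_nonneg_of_isLocalMin (hu : ContDiffAt ℝ 2 u x) (hmin : IsLocalMin u x) :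
    0 ≤ lapl u x :=
  Finset.sum_nonneg fun i _ => fderiv_fderiv_apply_nonneg_of_isLocalMin hu hmin (Pi.single i 1)

theorem tsupport_hess2_subset (u : (Fin n → ℝ) → ℝ) (i j : Fin n) :
    tsupport (fun y => hess2 u y i j) ⊆ tsupport u :=
  (tsupport_fderiv_apply_subset ℝ _).trans (tsupport_fderiv_apply_subset ℝ _)

theorem lapl_eq_zero_of_notMem_tsupport (hx : x ∉ tsupport u) : lapl u x = 0 :=
  Finset.sum_eq_zero fun i _ =>
    image_eq_zero_of_notMem_tsupport (f := fun y => hess2 u y i i)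
      fun hxi => hx (tsupport_hess2_subset u i i hxi)

theorem fderiv_comp_const_sub {𝕜 E F : Type*} [NontriviallyNormedField 𝕜]
    [NormedAddCommGroup E] [NormedSpace 𝕜 E] [NormedAddCommGroup F] [NormedSpace 𝕜 F]
    (g : E → F) (a y : E) :
    fderiv 𝕜 (fun z => g (a - z)) y = -fderiv 𝕜 g (a - y) := by
  have hneg := (ContinuousLinearEquiv.neg 𝕜 (M := E)).comp_right_fderiv
    (f := fun w => g (a + w)) (x := y)
  ext w
  simpa [Function.comp_def, sub_eq_add_neg, fderiv_comp_add_left] using DFunLike.congr_fun hneg w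

theorem lapl_comp_const_sub (u : (Fin n → ℝ) → ℝ) (a y : Fin n → ℝ) :
    lapl (fun z => u (a - z)) y = lapl u (a - y) := by
  refine Finset.sum_congr rfl fun i _ => ?_
  simp only [hess2, fderiv_comp_const_sub, neg_apply, fderiv_fun_neg,
    fderiv_comp_const_sub (fun z => fderiv ℝ u z (Pi.single i 1)), neg_neg]

theorem contDiff_sum_sq_sub (p : Fin n → ℝ) {k : WithTop ℕ∞} :
    ContDiff ℝ k fun y : Fin n → ℝ => ∑ j, (y j - p j) ^ 2 := by
  fun_prop

theorem fderiv_sum_sq_sub_single (p y : Fin n → ℝ) (i : Fin n) :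
    fderiv ℝ (fun y : Fin n → ℝ => ∑ j, (y j - p j) ^ 2) y (Pi.single i 1) = 2 * (y i - p i) := by
  have hderiv : HasFDerivAt (fun y : Fin n → ℝ => ∑ j, (y j - p j) ^ 2)
      (∑ j, (2 * (y j - p j)) • (ContinuousLinearMap.proj j : (Fin n → ℝ) →L[ℝ] ℝ)) y :=
    HasFDerivAt.fun_sum fun j _ => by
      simpa using
        ((hasFDerivAt_apply (𝕜 := ℝ) (F' := fun _ : Fin n => ℝ) j y).sub_const (p j)).pow 2
  simp [hderiv.fderiv, Pi.single_apply]

theorem lapl_sum_sq_sub (p x : Fin n → ℝ) :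
    lapl (fun y => ∑ j, (y j - p j) ^ 2) x = 2 * n := by
  have hcoord (i : Fin n) :
      fderiv ℝ (fun y : Fin n → ℝ => 2 * (y i - p i)) x (Pi.single i 1) = 2 := by
    have hderiv := ((hasFDerivAt_apply (𝕜 := ℝ) (F' := fun _ : Fin n => ℝ) i x).sub_const
      (p i)).const_mul 2
    simp [hderiv.fderiv]
  simp only [lapl, hess2, fderiv_sum_sq_sub_single, hcoord]
  simp [mul_comm]

theorem sq_dist_le_sum_sq_sub {ι : Type*} [Fintype ι] (x p : ι → ℝ) :
    dist x p ^ 2 ≤ ∑ j, (x j - p j) ^ 2 := by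
  have hnonneg : 0 ≤ ∑ j, (x j - p j) ^ 2 := Finset.sum_nonneg fun j _ => sq_nonneg _
  refine (Real.le_sqrt dist_nonneg hnonneg).1 <| (dist_pi_le_iff (Real.sqrt_nonneg _)).2 fun j => ?_
  refine Real.le_sqrt_of_sq_le ?_
  rw [Real.dist_eq, sq_abs]
  exact Finset.single_le_sum (f := fun j => (x j - p j) ^ 2) (fun j _ => sq_nonneg _)
    (Finset.mem_univ j)

theorem exists_mem_ball_neg_le_lapl {p : Fin n → ℝ} {r ε : ℝ} (hr : 0 < r) (hε : 0 ≤ ε)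
    (hcont : ContinuousOn u (closedBall p r)) (hsmooth : ∀ x ∈ ball p r, ContDiffAt ℝ 2 u x)
    (hsphere : ∀ x ∈ sphere p r, u p < u x + ε * r ^ 2) :
    ∃ x ∈ ball p r, -(ε * (2 * n)) ≤ lapl u x := by
  set q : (Fin n → ℝ) → ℝ := fun y => ∑ j, (y j - p j) ^ 2 with hq
  have hqsmooth : ContDiff ℝ 2 q := contDiff_sum_sq_sub p
  have hqsphere : ∀ x ∈ sphere p r, r ^ 2 ≤ q x := fun x hx =>
    mem_sphere.1 hx ▸ sq_dist_le_sum_sq_sub x p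
  obtain ⟨x, hx, hmin⟩ : ∃ x ∈ ball p r, IsLocalMin (fun y => u y + ε * q y) x := by
    refine exists_isLocalMin_mem_ball (hcont.add (hqsmooth.continuous.const_mul ε).continuousOn)
      (mem_closedBall_self hr.le) fun x hx => ?_
    have hqp : q p = 0 := by simp [hq]
    calc u p + ε * q p = u p := by simp [hqp]
      _ < u x + ε * r ^ 2 := hsphere x hx
      _ ≤ u x + ε * q x := by gcongr; exact hqsphere x hx
  have hux : ContDiffAt ℝ 2 u x := hsmooth x hx
  have hqx : ContDiffAt ℝ 2 q x := hqsmooth.contDiffAt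
  have hεqx : ContDiffAt ℝ 2 (fun y => ε * q y) x := contDiffAt_const.mul hqx
  refine ⟨x, hx, neg_le_iff_add_nonneg.2 ?_⟩
  calc 0 ≤ lapl (fun y => u y + ε * q y) x := lapl_nonneg_of_isLocalMin (hux.add hεqx) hmin
    _ = lapl u x + ε * (2 * n) := by
      rw [lapl_add hux hεqx, lapl_const_mul ε hqx, lapl_sum_sq_sub]

end Laplacian

section Convolution

theorem fderiv_convolution_left_apply {𝕜 G E E' F : Type*} [RCLike 𝕜]
    [NormedAddCommGroup G] [NormedSpace 𝕜 G] [MeasurableSpace G] [BorelSpace G]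
    [NormedAddCommGroup E] [NormedSpace 𝕜 E] [NormedAddCommGroup E'] [NormedSpace 𝕜 E']
    [NormedAddCommGroup F] [NormedSpace ℝ F] [NormedSpace 𝕜 F]
    (L : E →L[𝕜] E' →L[𝕜] F) {μ : Measure G} [SFinite μ] [μ.IsAddLeftInvariant]
    [μ.IsNegInvariant] {k : G → E} {f : G → E'} (hk : ContDiff 𝕜 1 k)
    (hks : HasCompactSupport k) (hf : LocallyIntegrable f μ) (x v : G) :
    fderiv 𝕜 (k ⋆[L, μ] f) x v = ((fun z => fderiv 𝕜 k z v) ⋆[L, μ] f) x := by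
  rw [← convolution_flip, (hks.hasFDerivAt_convolution_right L.flip hf hk x).fderiv,
    convolution_precompR_apply L.flip hf (hks.fderiv 𝕜) (hk.continuous_fderiv one_ne_zero),
    convolution_flip]

variable {n : ℕ} {k f : (Fin n → ℝ) → ℝ}

theorem hess2_convolution (hk : ContDiff ℝ 2 k) (hks : HasCompactSupport k)
    (hf : LocallyIntegrable f) (x : Fin n → ℝ) (i j : Fin n) :
    hess2 (k ⋆[lsmul ℝ ℝ] f) x i j = ((fun y => hess2 k y i j) ⋆[lsmul ℝ ℝ] f) x := by
  have hk' : ContDiff ℝ 1 fun z => fderiv ℝ k z (Pi.single i 1) :=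
    (hk.fderiv_right (m := 1) (by norm_num)).clm_apply contDiff_const
  simp only [hess2, fderiv_convolution_left_apply _ (hk.of_le one_le_two) hks hf]
  exact fderiv_convolution_left_apply _ hk' (hks.fderiv_apply ℝ _) hf x _

theorem lapl_convolution (hk : ContDiff ℝ 2 k) (hks : HasCompactSupport k)
    (hf : LocallyIntegrable f) (x : Fin n → ℝ) :
    lapl (k ⋆[lsmul ℝ ℝ] f) x = (lapl k ⋆[lsmul ℝ ℝ] f) x := by
  have hexists (i : Fin n) :
      ConvolutionExistsAt (fun y => hess2 k y i i) f x (lsmul ℝ ℝ) volume :=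
    (hks.mono' ((subset_tsupport _).trans (tsupport_hess2_subset k i i))).convolutionExists_left
      _ (continuous_iff_continuousAt.2 fun y => continuousAt_hess2 hk.contDiffAt i i) hf x
  calc lapl (k ⋆[lsmul ℝ ℝ] f) x
      = ∑ i, ∫ t, hess2 k t i i • f (x - t) :=
        Finset.sum_congr rfl fun i _ => hess2_convolution hk hks hf x i i
    _ = ∫ t, ∑ i, hess2 k t i i • f (x - t) :=
        (integral_finsetSum _ fun i _ => hexists i).symm
    _ = (lapl k ⋆[lsmul ℝ ℝ] f) x := by
        simp only [convolution_lsmul, lapl, Finset.sum_smul]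

end Convolution

section Mollification

theorem setIntegral_mul_le_of_integral_eq_one {X : Type*} [MeasurableSpace X] {μ : Measure X}
    {s : Set X} {α φ : X → ℝ} {C : ℝ} (hαφ : IntegrableOn (fun x => α x * φ x) s μ)
    (hφ : ∀ x, 0 ≤ φ x) (hφs : Function.support φ ⊆ s) (hφ_one : ∫ x, φ x ∂μ = 1)
    (hα : ∀ x ∈ Function.support φ, α x ≤ C) :
    ∫ x in s, α x * φ x ∂μ ≤ C := by
  have hφ_int : Integrable φ μ := integrable_of_integral_eq_one hφ_one
  have hle (x : X) : α x * φ x ≤ C * φ x := by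
    by_cases hx : φ x = 0
    · simp [hx]
    · exact mul_le_mul_of_nonneg_right (hα x hx) (hφ x)
  calc ∫ x in s, α x * φ x ∂μ
      ≤ ∫ x in s, C * φ x ∂μ := setIntegral_mono hαφ (hφ_int.const_mul C).integrableOn hle
    _ = C * ∫ x in s, φ x ∂μ := integral_const_mul C _
    _ = C * ∫ x, φ x ∂μ := by
        rw [setIntegral_eq_integral_of_forall_compl_eq_zero fun x hx =>
          Function.notMem_support.1 fun hxφ => hx (hφs hxφ)]
    _ = C := by rw [hφ_one, mul_one]

theorem tsupport_normed_const_sub {E : Type*} [NormedAddCommGroup E] [NormedSpace ℝ E]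
    [HasContDiffBump E] [FiniteDimensional ℝ E] [MeasurableSpace E] [BorelSpace E]
    {μ : Measure E} [IsLocallyFiniteMeasure μ] [μ.IsOpenPosMeasure]
    (ρ : ContDiffBump (0 : E)) (x : E) :
    tsupport (fun y => ρ.normed μ (x - y)) = closedBall x ρ.rOut := by
  have hpreimage := tsupport_comp_eq_preimage (ρ.normed μ) (Homeomorph.subLeft x)
  rw [ρ.tsupport_normed_eq] at hpreimage
  refine hpreimage.trans ?_
  ext y
  simp [dist_eq_norm, norm_sub_rev]

variable {n : ℕ} {Ω : Set (Fin n → ℝ)} {f α : (Fin n → ℝ) → ℝ}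

theorem lapl_convolution_eq_setIntegral {k F : (Fin n → ℝ) → ℝ} {x : Fin n → ℝ}
    (hk : ContDiff ℝ 2 k) (hks : HasCompactSupport k) (hF : LocallyIntegrable F)
    (hsupp : tsupport (fun y => k (x - y)) ⊆ Ω)
    (hFf : EqOn F f (tsupport fun y => k (x - y))) :
    lapl (k ⋆[lsmul ℝ ℝ] F) x = ∫ y in Ω, f y * lapl (fun z => k (x - z)) y := by
  have hzero {y : Fin n → ℝ} (hy : y ∉ tsupport fun y => k (x - y)) : lapl k (x - y) = 0 := by
    rw [← lapl_comp_const_sub, lapl_eq_zero_of_notMem_tsupport hy]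
  have hcongr (y : Fin n → ℝ) : lapl k (x - y) • F y = f y * lapl k (x - y) := by
    by_cases hy : y ∈ tsupport fun y => k (x - y)
    · rw [hFf hy, smul_eq_mul, mul_comm]
    · simp [hzero hy]
  simp only [lapl_comp_const_sub]
  rw [lapl_convolution hk hks hF, convolution_lsmul_swap, integral_congr_ae (.of_forall hcongr),
    setIntegral_eq_integral_of_forall_compl_eq_zero fun y hy => ?_]
  rw [hzero fun hy' => hy (hsupp hy'), mul_zero]

theorem DistributionalLaplLE.lapl_convolution_le (hdist : DistributionalLaplLE Ω f α)
    (hΩ : IsOpen Ω) (hα : ContinuousOn α Ω) {F : (Fin n → ℝ) → ℝ} (hF : LocallyIntegrable F)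
    (ρ : ContDiffBump (0 : Fin n → ℝ)) {x : Fin n → ℝ} {C : ℝ}
    (hball : closedBall x ρ.rOut ⊆ Ω) (hFf : EqOn F f (closedBall x ρ.rOut))
    (hC : ∀ y ∈ closedBall x ρ.rOut, α y ≤ C) :
    lapl (ρ.normed volume ⋆[lsmul ℝ ℝ] F) x ≤ C := by
  set φ : (Fin n → ℝ) → ℝ := fun y => ρ.normed volume (x - y)
  have hφ_tsupport : tsupport φ = closedBall x ρ.rOut := tsupport_normed_const_sub ρ x
  have hφ_supp : Function.support φ ⊆ closedBall x ρ.rOut := hφ_tsupport ▸ subset_tsupport φ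
  have hφ_smooth : ContDiff ℝ (⊤ : ℕ∞) φ :=
    ρ.contDiff_normed.comp (contDiff_const.sub contDiff_id)
  have hφ_compact : HasCompactSupport φ := by
    simpa only [HasCompactSupport, hφ_tsupport] using isCompact_closedBall x ρ.rOut
  have hφ_nonneg (y : Fin n → ℝ) : 0 ≤ φ y := ρ.nonneg_normed _
  have hφ_integral : ∫ y, φ y = 1 :=
    (integral_sub_left_eq_self (ρ.normed volume) volume x).trans ρ.integral_normed
  have hαφ_cont : Continuous fun y => α y * φ y :=
    (hα.mul hφ_smooth.continuous.continuousOn).continuous_of_tsupport_subset hΩ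
      ((tsupport_mul_subset_right (f := α)).trans (hφ_tsupport ▸ hball))
  have hαφ_int : Integrable fun y => α y * φ y :=
    hαφ_cont.integrable_of_hasCompactSupport hφ_compact.mul_left
  calc lapl (ρ.normed volume ⋆[lsmul ℝ ℝ] F) x
      = ∫ y in Ω, f y * lapl φ y :=
        lapl_convolution_eq_setIntegral (ρ.contDiff_normed (n := 2)) ρ.hasCompactSupport_normed hF
          (hφ_tsupport ▸ hball) (hφ_tsupport ▸ hFf)
    _ ≤ ∫ y in Ω, α y * φ y :=
        hdist φ hφ_smooth hφ_compact (hφ_tsupport ▸ hball) hφ_nonneg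
    _ ≤ C := setIntegral_mul_le_of_integral_eq_one hαφ_int.integrableOn hφ_nonneg
        (hφ_supp.trans hball) hφ_integral fun y hy => hC y (hφ_supp hy)

theorem exists_pos_cthickening_subset_forall_closedBall_dist_le {X Y : Type*}
    [PseudoMetricSpace X] [ProperSpace X] [PseudoMetricSpace Y] {K Ω : Set X} {f : X → Y}
    (hK : IsCompact K) (hΩ : IsOpen Ω) (hKΩ : K ⊆ Ω) (hf : ContinuousOn f Ω) {ε : ℝ}
    (hε : 0 < ε) :
    ∃ δ > 0, cthickening δ K ⊆ Ω ∧ ∀ x ∈ K, ∀ y ∈ closedBall x δ, dist (f y) (f x) ≤ ε := by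
  obtain ⟨δ₁, hδ₁, hsub⟩ := hK.exists_cthickening_subset_open hΩ hKΩ
  obtain ⟨δ₂, hδ₂, hclose⟩ := uniformContinuousOn_iff_le.1
    (hK.cthickening.uniformContinuousOn_of_continuous (hf.mono hsub)) ε hε
  refine ⟨min δ₁ δ₂, lt_min hδ₁ hδ₂,
    (cthickening_mono (min_le_left δ₁ δ₂) K).trans hsub, fun x hx y hy => ?_⟩
  have hyK : y ∈ cthickening δ₁ K :=
    closedBall_subset_cthickening hx δ₁ (closedBall_subset_closedBall (min_le_left δ₁ δ₂) hy)
  exact hclose y hyK x (self_subset_cthickening K hx) ((mem_closedBall.1 hy).trans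
    (min_le_right δ₁ δ₂))

theorem DistributionalLaplLE.exists_contDiff_approx (hdist : DistributionalLaplLE Ω f α)
    (hΩ : IsOpen Ω) (hf : ContinuousOn f Ω) (hα : ContinuousOn α Ω) {K : Set (Fin n → ℝ)}
    (hK : IsCompact K) (hKΩ : K ⊆ Ω) {ε : ℝ} (hε : 0 < ε) :
    ∃ g : (Fin n → ℝ) → ℝ, ContDiff ℝ 2 g ∧ ∀ x ∈ K, |g x - f x| ≤ ε ∧ lapl g x ≤ α x + ε := by
  obtain ⟨δ, hδ, hδΩ, hclose⟩ :=
    exists_pos_cthickening_subset_forall_closedBall_dist_le hK hΩ hKΩ (hf.prodMk hα) hε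
  -- `f` is unconstrained outside `Ω`, so its truncation is mollified instead.
  set F : (Fin n → ℝ) → ℝ := (cthickening δ K).indicator f
  have hF : Integrable F :=
    ((hf.mono hδΩ).integrableOn_compact hK.cthickening).integrable_indicator
      isClosed_cthickening.measurableSet
  let ρ : ContDiffBump (0 : Fin n → ℝ) := ⟨δ / 2, δ, half_pos hδ, half_lt_self hδ⟩
  refine ⟨ρ.normed volume ⋆[lsmul ℝ ℝ] F, ρ.hasCompactSupport_normed.contDiff_convolution_left
    (n := 2) _ ρ.contDiff_normed hF.locallyIntegrable, fun x hx => ?_⟩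
  have hball : closedBall x δ ⊆ cthickening δ K := closedBall_subset_cthickening hx δ
  have hFf : EqOn F f (closedBall x δ) := eqOn_indicator.mono hball
  have hFx : F x = f x := hFf (mem_closedBall_self hδ.le)
  constructor
  · rw [← hFx]
    refine ρ.dist_normed_convolution_le hF.aestronglyMeasurable fun y hy => ?_
    rw [hFx, hFf (ball_subset_closedBall hy)]
    exact (le_max_left _ _).trans (hclose x hx y (ball_subset_closedBall hy))
  · refine hdist.lapl_convolution_le hΩ hα hF.locallyIntegrable ρ (hball.trans hδΩ) hFf
      fun y hy => ?_
    have hαy : dist (α y) (α x) ≤ ε := (le_max_right _ _).trans (hclose x hx y hy)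
    linarith [(abs_le.1 hαy).2]

end Mollification

section Stability

variable {n : ℕ} {Ω : Set (Fin n → ℝ)} {f α g h : (Fin n → ℝ) → ℝ} {p : Fin n → ℝ}

theorem exists_mem_ball_lapl_le_of_touching_below {r ε δ : ℝ} (hr : 0 < r) (hε : 0 ≤ ε)
    (hδ : 2 * δ < ε * r ^ 2) (hg : ContDiff ℝ 2 g)
    (hgf : ∀ x ∈ closedBall p r, |g x - f x| ≤ δ)
    (hh : ∀ x ∈ closedBall p r, ContDiffAt ℝ 2 h x) (hhp : h p = f p)
    (hhf : ∀ x ∈ closedBall p r, h x ≤ f x) :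
    ∃ x ∈ ball p r, lapl h x ≤ lapl g x + ε * (2 * n) := by
  have hsphere : ∀ x ∈ sphere p r, g p - h p < g x - h x + ε * r ^ 2 := fun x hx => by
    have hxr : x ∈ closedBall p r := sphere_subset_closedBall hx
    have hgp : g p - f p ≤ δ := (abs_le.1 (hgf p (mem_closedBall_self hr.le))).2
    have hgx : -δ ≤ g x - f x := (abs_le.1 (hgf x hxr)).1
    linarith [hhf x hxr]
  obtain ⟨x, hx, hlapl⟩ := exists_mem_ball_neg_le_lapl (u := fun y => g y - h y) hr hε
    (fun y hy => (hg.contDiffAt.sub (hh y hy)).continuousAt.continuousWithinAt)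
    (fun y hy => hg.contDiffAt.sub (hh y (ball_subset_closedBall hy))) hsphere
  rw [lapl_sub hg.contDiffAt (hh x (ball_subset_closedBall hx))] at hlapl
  exact ⟨x, hx, by linarith⟩

theorem viscosityLaplLEAt_of_forall_exists_contDiff_approx (hα : ContinuousAt α p)
    (happrox : ∀ K ⊆ Ω, IsCompact K → ∀ ε > 0, ∃ g : (Fin n → ℝ) → ℝ, ContDiff ℝ 2 g ∧
      ∀ x ∈ K, |g x - f x| ≤ ε ∧ lapl g x ≤ α x + ε) :
    ViscosityLaplLEAt Ω f α p := by
  intro U h hU hpU hUΩ hh hhp hhf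
  have hh_at {x : Fin n → ℝ} (hx : x ∈ U) : ContDiffAt ℝ 2 h x := hh.contDiffAt (hU.mem_nhds hx)
  have happrox_le : ∀ ε > 0, lapl h p ≤ α p + ε * (2 * n + 3) := fun ε hε => by
    obtain ⟨r, hr, hnear⟩ := nhds_basis_closedBall.eventually_iff.1 <|
      (hU.eventually_mem hpU).and <|
        ((continuousAt_lapl (hh_at hpU)).eventually_const_lt (sub_lt_self (lapl h p) hε)).and
          (hα.eventually_lt_const (lt_add_of_pos_right (α p) hε))
    have hrU : closedBall p r ⊆ U := fun x hx => (hnear hx).1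
    obtain ⟨g, hg, hgf⟩ := happrox (closedBall p r) (hrU.trans hUΩ) (isCompact_closedBall p r)
      (min ε (ε * r ^ 2 / 4)) (by positivity)
    have hsmall : 2 * min ε (ε * r ^ 2 / 4) < ε * r ^ 2 := by
      have hpos : 0 < ε * r ^ 2 := by positivity
      linarith [min_le_right ε (ε * r ^ 2 / 4)]
    obtain ⟨x, hx, hle⟩ := exists_mem_ball_lapl_le_of_touching_below hr hε.le hsmall hg
      (fun y hy => (hgf y hy).1) (fun y hy => hh_at (hrU hy)) hhp fun y hy => hhf y (hrU hy)
    obtain ⟨-, hlapl_h, hαx⟩ := hnear (ball_subset_closedBall hx)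
    have hlapl_g : lapl g x ≤ α x + ε :=
      (hgf x (ball_subset_closedBall hx)).2.trans (by gcongr; exact min_le_left _ _)
    linarith
  refine le_of_forall_pos_le_add fun ε hε => ?_
  simpa [div_mul_cancel₀ ε (by positivity : (2 * n + 3 : ℝ) ≠ 0)] using
    happrox_le (ε / (2 * n + 3)) (by positivity)

end Stability

theorem distributional_implies_viscosity_laplacian_general {n : ℕ} {Ω : Set (Fin n → ℝ)}
    (hΩ : IsOpen Ω) {f α : (Fin n → ℝ) → ℝ} (hf : ContinuousOn f Ω) (hα : ContinuousOn α Ω)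
    (hdist : DistributionalLaplLE Ω f α) {p : Fin n → ℝ} (hp : p ∈ Ω) :
    ViscosityLaplLEAt Ω f α p :=
  viscosityLaplLEAt_of_forall_exists_contDiff_approx (hα.continuousAt (hΩ.mem_nhds hp))
    fun _ hKΩ hK _ hε => hdist.exists_contDiff_approx hΩ hf hα hK hKΩ hε

/-- If `Δ f ≤ α` holds on `Ω` in the distributional sense, then it holds at every point
of `Ω` in the viscosity sense. -/
theorem distributional_implies_viscosity_laplacian {n : ℕ}
    (Ω : Set (Fin n → ℝ)) (hΩ : IsOpen Ω)
    (f : (Fin n → ℝ) → ℝ) (hf : ContinuousOn f Ω)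
    (α : (Fin n → ℝ) → ℝ) (hα : ContDiffOn ℝ (⊤ : ℕ∞) α Ω)
    (hdist : ∀ φ : (Fin n → ℝ) → ℝ, ContDiff ℝ (⊤ : ℕ∞) φ → HasCompactSupport φ →
      tsupport φ ⊆ Ω → (∀ x, 0 ≤ φ x) →
      ∫ x in Ω, f x * lapl φ x ≤ ∫ x in Ω, α x * φ x) :
    ∀ p ∈ Ω, ∀ (U : Set (Fin n → ℝ)) (h : (Fin n → ℝ) → ℝ),
      IsOpen U → p ∈ U → U ⊆ Ω → ContDiffOn ℝ 2 h U → h p = f p →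
      (∀ x ∈ U, h x ≤ f x) → lapl h p ≤ α p :=
  fun _ hp => distributional_implies_viscosity_laplacian_general hΩ hf hα.continuousOn hdist hp
end

section
/- Let Ω ⊆ ℝⁿ be open, let f : Ω → ℝ be continuous, and let A be a smooth field of symmetric n×n real matrices on Ω. If f satisfies Hess f ≤ A on Ω in the distributional sense, then f satisfies Hess f ≤ A at every point of Ω in the viscosity sense. -/
open Finset

/-!
For a fixed direction `v`, the vector fields `V = ψ v` turn the distributional hypothesis into
`∂ᵥ²f ≤ g := vᵀ A v`, tested against the squares `ψ²`. Since squares of bump functions are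
themselves mollifiers, the inequality passes to smooth approximations of `f`: wherever `g < a` they
satisfy `∂ᵥ² ≤ a` pointwise, which bounds their symmetric second differences with step `t v` by
`a t²`. Second differences involve no derivatives, so the bound survives the limit: near `p`,
`f (p + t v) + f (p - t v) - 2 f p ≤ a t²`. A function `h` touching `f` from below at `p` inherits
this bound, and the second derivative test in `t` gives `∂ᵥ²h(p) ≤ a` for every `a > g p`.
-/

open MeasureTheory Filter Topology ContinuousLinearMap
open scoped ContDiff Convolution

theorem deriv_deriv_nonpos_of_isLocalMax {f : ℝ → ℝ} {x : ℝ} (hf : ContinuousAt f x)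
    (hmax : IsLocalMax f x) : deriv (deriv f) x ≤ 0 := by
  by_contra! hpos
  have hmin : IsLocalMin f x := isLocalMin_of_deriv_deriv_pos hpos hmax.deriv_eq_zero hf
  have hconst : f =ᶠ[𝓝 x] fun _ => f x := by
    filter_upwards [hmax, hmin] with y hle hge using le_antisymm hle hge
  simp [hconst.deriv.deriv_eq] at hpos

theorem tsupport_sq_subset {X : Type*} [TopologicalSpace X] (ψ : X → ℝ) :
    tsupport (ψ ^ 2) ⊆ tsupport ψ :=
  closure_mono fun x hx hψ => hx (by simp [hψ])

theorem hasCompactSupport_sq {X : Type*} [TopologicalSpace X] {ψ : X → ℝ}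
    (hψ : HasCompactSupport ψ) : HasCompactSupport (ψ ^ 2) :=
  hψ.mono' <| (subset_tsupport _).trans (tsupport_sq_subset ψ)

theorem integrable_mul_of_tsupport_subset {X : Type*} [TopologicalSpace X] [T2Space X]
    [MeasurableSpace X] [OpensMeasurableSpace X] {μ : Measure X} {Ω : Set X} {g χ : X → ℝ}
    (hg : LocallyIntegrableOn g Ω μ) (hχ : Continuous χ) (hχc : HasCompactSupport χ)
    (hχΩ : tsupport χ ⊆ Ω) : Integrable (fun x => g x * χ x) μ := by
  have hK : IntegrableOn g (tsupport χ) μ := hg.integrableOn_compact_subset hχΩ hχc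
  refine (integrableOn_iff_integrable_of_support_subset fun x hx => ?_).1
    (hK.mul_continuousOn hχ.continuousOn hχc)
  exact subset_tsupport χ (right_ne_zero_of_mul hx)

theorem isCompact_segment {E : Type*} [AddCommGroup E] [Module ℝ E] [TopologicalSpace E]
    [IsTopologicalAddGroup E] [ContinuousSMul ℝ E] (x y : E) :
    IsCompact (segment ℝ x y) := by
  rw [segment_eq_image_lineMap]
  exact isCompact_Icc.image AffineMap.lineMap_continuous

/-- The symmetric second difference of `f` at `p` with step `w`, the derivative-free substitute for
the second derivative of `f` along `w`. -/
def secondDiff {G : Type*} [AddGroup G] (f : G → ℝ) (p w : G) : ℝ :=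
  f (p + w) + f (p - w) - 2 * f p

section DirDeriv

variable {E : Type*} [NormedAddCommGroup E] [NormedSpace ℝ E]

/-- The directional derivative `∂ᵥ h`, as a function of the base point, so that `∂ᵥ²h` is the
iterate `dirDeriv v (dirDeriv v h)`. -/
noncomputable def dirDeriv (v : E) (h : E → ℝ) (x : E) : ℝ := fderiv ℝ h x v

variable {h : E → ℝ} {p v x : E} {a : ℝ}

theorem contDiffAt_dirDeriv {m n : WithTop ℕ∞} (hh : ContDiffAt ℝ n h x) (hmn : m + 1 ≤ n) :
    ContDiffAt ℝ m (dirDeriv v h) x :=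
  (hh.fderiv_right hmn).clm_apply contDiffAt_const

theorem contDiff_dirDeriv {m n : WithTop ℕ∞} (hh : ContDiff ℝ n h) (hmn : m + 1 ≤ n) :
    ContDiff ℝ m (dirDeriv v h) :=
  (hh.fderiv_right hmn).clm_apply contDiff_const

theorem dirDeriv_const_smul (c : ℝ) (v : E) (h : E → ℝ) :
    dirDeriv v (c • h) = c • dirDeriv v h := by
  ext x
  simp [dirDeriv, fderiv_const_smul_field]

theorem dirDeriv_smul_dirDeriv_smul (c : ℝ) (v : E) (h : E → ℝ) :
    dirDeriv (c • v) (dirDeriv (c • v) h) = c ^ 2 • dirDeriv v (dirDeriv v h) := by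
  have dirDeriv_smul (k : E → ℝ) : dirDeriv (c • v) k = c • dirDeriv v k := by
    ext x
    simp [dirDeriv]
  rw [dirDeriv_smul, dirDeriv_smul, dirDeriv_const_smul, smul_smul, sq]

theorem tsupport_dirDeriv_dirDeriv_sq_subset (v : E) (ψ : E → ℝ) :
    tsupport (dirDeriv v (dirDeriv v (ψ ^ 2))) ⊆ tsupport ψ :=
  calc
    tsupport (dirDeriv v (dirDeriv v (ψ ^ 2))) ⊆ tsupport (dirDeriv v (ψ ^ 2)) :=
      tsupport_fderiv_apply_subset ℝ v
    _ ⊆ tsupport (ψ ^ 2) := tsupport_fderiv_apply_subset ℝ v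
    _ ⊆ tsupport ψ := tsupport_sq_subset ψ

theorem dirDeriv_comp_const_sub (hh : Differentiable ℝ h) (x v : E) :
    dirDeriv v (fun y => h (x - y)) = fun y => -dirDeriv v h (x - y) := by
  ext y
  have hcomp := (hh (x - y)).hasFDerivAt.comp y ((hasFDerivAt_id y).const_sub x)
  simpa [dirDeriv, Function.comp_def] using DFunLike.congr_fun hcomp.fderiv v

theorem dirDeriv_dirDeriv_comp_const_sub (hh : ContDiff ℝ 2 h) (x v y : E) :
    dirDeriv v (dirDeriv v (fun z => h (x - z))) y = dirDeriv v (dirDeriv v h) (x - y) := by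
  have hdh : Differentiable ℝ (dirDeriv v h) :=
    (contDiff_dirDeriv hh (m := 1) (by norm_num)).differentiable one_ne_zero
  rw [dirDeriv_comp_const_sub (hh.differentiable two_ne_zero),
    show (fun z => -dirDeriv v h (x - z)) = (-1 : ℝ) • fun z => dirDeriv v h (x - z) by ext; simp,
    dirDeriv_const_smul, dirDeriv_comp_const_sub hdh]
  simp

theorem hasDerivAt_comp_add_smul {s : ℝ} (hh : DifferentiableAt ℝ h (p + s • v)) :
    HasDerivAt (fun t : ℝ => h (p + t • v)) (dirDeriv v h (p + s • v)) s := by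
  have hline : HasDerivAt (fun t : ℝ => p + t • v) v s := by
    simpa using ((hasDerivAt_id s).smul_const v).const_add p
  exact hh.hasFDerivAt.comp_hasDerivAt s hline

theorem secondDiff_le_of_dirDeriv_dirDeriv_le
    (hh : ∀ x ∈ segment ℝ (p - v) (p + v), ContDiffAt ℝ 2 h x)
    (ha : ∀ x ∈ segment ℝ (p - v) (p + v), dirDeriv v (dirDeriv v h) x ≤ a) :
    secondDiff h p v ≤ a := by
  have hmem {s : ℝ} (hs : s ∈ Set.Icc (-1) 1) : p + s • v ∈ segment ℝ (p - v) (p + v) := by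
    refine ⟨(1 - s) / 2, (1 + s) / 2, by linarith [hs.2], by linarith [hs.1], by ring, ?_⟩
    module
  have hderiv {s : ℝ} (hs : s ∈ Set.Icc (-1) 1) :
      HasDerivAt (fun t : ℝ => h (p + t • v) - a / 2 * t ^ 2)
        (dirDeriv v h (p + s • v) - a * s) s := by
    have hline := hasDerivAt_comp_add_smul ((hh _ (hmem hs)).differentiableAt two_ne_zero)
    have hsq : HasDerivAt (fun t : ℝ => a / 2 * t ^ 2) (a * s) s :=
      ((hasDerivAt_pow 2 s).const_mul (a / 2)).congr_deriv (by norm_num; ring)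
    exact hline.fun_sub hsq
  have hderiv2 {s : ℝ} (hs : s ∈ Set.Icc (-1) 1) :
      HasDerivAt (fun t : ℝ => dirDeriv v h (p + t • v) - a * t)
        (dirDeriv v (dirDeriv v h) (p + s • v) - a) s := by
    have hdiff := (contDiffAt_dirDeriv (v := v) (hh _ (hmem hs)) (m := 1)
      (by norm_num)).differentiableAt one_ne_zero
    simpa using (hasDerivAt_comp_add_smul hdiff).fun_sub ((hasDerivAt_id' s).const_mul a)
  have hconc : ConcaveOn ℝ (Set.Icc (-1) 1) fun t : ℝ => h (p + t • v) - a / 2 * t ^ 2 :=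
    concaveOn_of_hasDerivWithinAt2_nonpos (convex_Icc _ _)
      (fun s hs => (hderiv hs).continuousAt.continuousWithinAt)
      (fun s hs => (hderiv (interior_subset hs)).hasDerivWithinAt)
      (fun s hs => (hderiv2 (interior_subset hs)).hasDerivWithinAt)
      (fun s hs => sub_nonpos.2 (ha _ (hmem (interior_subset hs))))
  have hmid := hconc.2 (Set.left_mem_Icc.2 (by norm_num)) (Set.right_mem_Icc.2 (by norm_num))
    one_half_pos.le one_half_pos.le (add_halves 1)
  norm_num [← sub_eq_add_neg] at hmid
  rw [secondDiff]
  linarith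

theorem eventually_hasDerivAt_secondDiff_smul (hh : ∀ᶠ x in 𝓝 p, DifferentiableAt ℝ h x) (v : E) :
    ∀ᶠ t in 𝓝 (0 : ℝ), HasDerivAt (fun s : ℝ => secondDiff h p (s • v))
      (dirDeriv v h (p + t • v) + dirDeriv (-v) h (p + t • -v)) t := by
  have hline (w : E) : Tendsto (fun t : ℝ => p + t • w) (𝓝 0) (𝓝 p) :=
    Continuous.tendsto' (by fun_prop) _ _ (by simp)
  filter_upwards [(hline v).eventually hh, (hline (-v)).eventually hh] with t hpos hneg
  simpa [secondDiff, sub_eq_add_neg] using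
    ((hasDerivAt_comp_add_smul hpos).fun_add (hasDerivAt_comp_add_smul hneg)).sub_const (2 * h p)

theorem dirDeriv_dirDeriv_le_of_eventually_secondDiff_le (hh : ContDiffAt ℝ 2 h p)
    (ha : ∀ᶠ t in 𝓝 (0 : ℝ), secondDiff h p (t • v) ≤ a * t ^ 2) :
    dirDeriv v (dirDeriv v h) p ≤ a := by
  let k : ℝ → ℝ := fun t => secondDiff h p (t • v) - a * t ^ 2
  have hk : ∀ᶠ t in 𝓝 0, HasDerivAt k
      (dirDeriv v h (p + t • v) + dirDeriv (-v) h (p + t • -v) - a * (2 * t)) t := by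
    have hdiff : ∀ᶠ x in 𝓝 p, DifferentiableAt ℝ h x :=
      (hh.eventually (by simp)).mono fun x hx => hx.differentiableAt two_ne_zero
    filter_upwards [eventually_hasDerivAt_secondDiff_smul hdiff v] with t ht
    simpa using ht.fun_sub ((hasDerivAt_pow 2 t).const_mul a)
  have hk2 : deriv (deriv k) 0 = 2 * dirDeriv v (dirDeriv v h) p - a * 2 := by
    have hdiff (w : E) : DifferentiableAt ℝ (dirDeriv w h) (p + (0 : ℝ) • w) := by
      rw [zero_smul, add_zero]
      exact (contDiffAt_dirDeriv hh (m := 1) (by norm_num)).differentiableAt one_ne_zero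
    have hneg : dirDeriv (-v) (dirDeriv (-v) h) p = dirDeriv v (dirDeriv v h) p := by
      simpa using congr_fun (dirDeriv_smul_dirDeriv_smul (-1) v h) p
    have hderiv := ((hasDerivAt_comp_add_smul (hdiff v)).fun_add
      (hasDerivAt_comp_add_smul (hdiff (-v)))).fun_sub
      (((hasDerivAt_id' 0).const_mul 2).const_mul a)
    rw [EventuallyEq.deriv_eq (hk.mono fun t ht => ht.deriv), hderiv.deriv]
    simp [hneg, two_mul]
  have hmax : IsLocalMax k 0 := by
    filter_upwards [ha] with t ht
    simpa [k, secondDiff, two_mul] using ht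
  linarith [deriv_deriv_nonpos_of_isLocalMax hk.self_of_nhds.continuousAt hmax]

end DirDeriv

section Distributional

variable {E : Type*} [NormedAddCommGroup E] [NormedSpace ℝ E] [MeasurableSpace E]

/-- The inequality `∂ᵥ²f ≤ g` on `Ω` in the sense of distributions, tested against the squares
`ψ²` of test functions. The integrals run over the whole space: the values of `f` and `g` off `Ω`
do not matter, as `ψ` vanishes there. -/
def DistribSecondDerivLE (μ : Measure E) (Ω : Set E) (v : E) (f g : E → ℝ) : Prop :=
  ∀ ψ : E → ℝ, ContDiff ℝ ∞ ψ → HasCompactSupport ψ → tsupport ψ ⊆ Ω →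
    ∫ x, f x * dirDeriv v (dirDeriv v (ψ ^ 2)) x ∂μ ≤ ∫ x, g x * ψ x ^ 2 ∂μ

namespace DistribSecondDerivLE

variable {μ : Measure E} {Ω U : Set E} {v : E} {f f' g g' : E → ℝ}

theorem mono_set (h : DistribSecondDerivLE μ Ω v f g) (hU : U ⊆ Ω) :
    DistribSecondDerivLE μ U v f g :=
  fun ψ hψ hψc hψU => h ψ hψ hψc (hψU.trans hU)

theorem congr_left (h : DistribSecondDerivLE μ Ω v f g) (hff' : Set.EqOn f f' Ω) :
    DistribSecondDerivLE μ Ω v f' g := by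
  intro ψ hψ hψc hψΩ
  convert h ψ hψ hψc hψΩ using 3 with x
  by_cases hx : x ∈ Ω
  · rw [hff' hx]
  · rw [image_eq_zero_of_notMem_tsupport fun hmem =>
      hx (hψΩ (tsupport_dirDeriv_dirDeriv_sq_subset v ψ hmem)), mul_zero, mul_zero]

theorem mono_right [OpensMeasurableSpace E]
    (h : DistribSecondDerivLE μ Ω v f g)
    (hg : LocallyIntegrableOn g Ω μ) (hg' : LocallyIntegrableOn g' Ω μ)
    (hgg' : ∀ x ∈ Ω, g x ≤ g' x) : DistribSecondDerivLE μ Ω v f g' := by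
  intro ψ hψ hψc hψΩ
  have hint {k : E → ℝ} (hk : LocallyIntegrableOn k Ω μ) : Integrable (fun x => k x * ψ x ^ 2) μ :=
    integrable_mul_of_tsupport_subset hk (hψ.continuous.pow 2)
      (hasCompactSupport_sq hψc) ((tsupport_sq_subset ψ).trans hψΩ)
  refine (h ψ hψ hψc hψΩ).trans (integral_mono (hint hg) (hint hg') fun x => ?_)
  by_cases hx : x ∈ Ω
  · exact mul_le_mul_of_nonneg_right (hgg' x hx) (sq_nonneg _)
  · simp [image_eq_zero_of_notMem_tsupport fun hmem => hx (hψΩ hmem)]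

theorem smul (h : DistribSecondDerivLE μ Ω v f g) (c : ℝ) :
    DistribSecondDerivLE μ Ω (c • v) f (c ^ 2 • g) := by
  intro ψ hψ hψc hψΩ
  have hscaled := mul_le_mul_of_nonneg_left (h ψ hψ hψc hψΩ) (sq_nonneg c)
  simp only [← integral_const_mul, ← mul_assoc] at hscaled
  simpa only [dirDeriv_smul_dirDeriv_smul, Pi.smul_apply, smul_eq_mul, ← mul_assoc,
    mul_comm (f _) (c ^ 2)] using hscaled

end DistribSecondDerivLE

section Mollification

variable [BorelSpace E] [FiniteDimensional ℝ E] {μ : Measure E} [μ.IsAddHaarMeasure]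
  {f : E → ℝ}

theorem dirDeriv_convolution {φ : E → ℝ} (hφ : ContDiff ℝ 1 φ) (hφc : HasCompactSupport φ)
    (hf : LocallyIntegrable f μ) (v : E) :
    dirDeriv v (φ ⋆[lsmul ℝ ℝ, μ] f) = dirDeriv v φ ⋆[lsmul ℝ ℝ, μ] f := by
  ext x
  rw [dirDeriv, (hφc.hasFDerivAt_convolution_left _ hφ hf x).fderiv, precompL, convolution_flip,
    convolution_precompR_apply _ hf (hφc.fderiv ℝ) (hφ.continuous_fderiv one_ne_zero),
    convolution_flip]
  rfl

theorem dirDeriv_dirDeriv_convolution_apply {φ : E → ℝ} (hφ : ContDiff ℝ 2 φ)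
    (hφc : HasCompactSupport φ) (hf : LocallyIntegrable f μ) (v x : E) :
    dirDeriv v (dirDeriv v (φ ⋆[lsmul ℝ ℝ, μ] f)) x =
      ∫ y, f y * dirDeriv v (dirDeriv v fun z => φ (x - z)) y ∂μ := by
  rw [dirDeriv_convolution (hφ.of_le one_le_two) hφc hf,
    dirDeriv_convolution (contDiff_dirDeriv hφ (by norm_num)) (hφc.fderiv_apply ℝ v) hf,
    convolution_lsmul_swap]
  simp only [dirDeriv_dirDeriv_comp_const_sub hφ, smul_eq_mul, mul_comm]

theorem dirDeriv_dirDeriv_sq_convolution_le {Ω : Set E} {v x : E} {a : ℝ} {ψ : E → ℝ}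
    (h : DistribSecondDerivLE μ Ω v f fun _ => a) (hf : LocallyIntegrable f μ)
    (hψ : ContDiff ℝ ∞ ψ) (hψc : HasCompactSupport ψ) (hψ1 : ∫ y, ψ y ^ 2 ∂μ = 1)
    (hψΩ : ∀ y ∈ tsupport ψ, x - y ∈ Ω) :
    dirDeriv v (dirDeriv v ((ψ ^ 2 : E → ℝ) ⋆[lsmul ℝ ℝ, μ] f)) x ≤ a := by
  let χ : E → ℝ := fun y => ψ (x - y)
  have hχΩ : tsupport χ ⊆ Ω := fun y hy => by
    simpa using hψΩ _ (tsupport_comp_subset_preimage ψ (continuous_const.sub continuous_id) hy)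
  have hψ2 : ContDiff ℝ 2 (ψ ^ 2) := contDiff_infty.1 (hψ.pow 2) 2
  have hχ : (fun z => (ψ ^ 2) (x - z)) = χ ^ 2 := by
    ext z
    simp only [χ, Pi.pow_apply]
  calc
    dirDeriv v (dirDeriv v ((ψ ^ 2 : E → ℝ) ⋆[lsmul ℝ ℝ, μ] f)) x
      = ∫ y, f y * dirDeriv v (dirDeriv v (χ ^ 2)) y ∂μ := by
        rw [dirDeriv_dirDeriv_convolution_apply hψ2 (hasCompactSupport_sq hψc) hf, hχ]
    _ ≤ ∫ y, a * χ y ^ 2 ∂μ :=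
        h χ (hψ.comp (contDiff_const.sub contDiff_id))
          (hψc.comp_homeomorph (Homeomorph.subLeft x)) hχΩ
    _ = a := by
      rw [integral_const_mul, integral_sub_left_eq_self (fun y => ψ y ^ 2) μ x, hψ1, mul_one]

variable (μ) in
theorem exists_contDiff_integral_sq_eq_one {s : Set E} (hs : s ∈ 𝓝 0) :
    ∃ ψ : E → ℝ, ContDiff ℝ ∞ ψ ∧ HasCompactSupport ψ ∧ tsupport ψ ⊆ s ∧ ∫ x, ψ x ^ 2 ∂μ = 1 := by
  obtain ⟨χ, hχs, hχc, hχ, -, hχ0⟩ := exists_contDiff_tsupport_subset (n := ⊤) hs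
  have hpos : 0 < ∫ x, χ x ^ 2 ∂μ :=
    (hχ.continuous.pow 2).integral_pos_of_hasCompactSupport_nonneg_nonzero
      (hasCompactSupport_sq hχc) (fun x => sq_nonneg _) (x := 0) (by simp [hχ0])
  refine ⟨(√(∫ x, χ x ^ 2 ∂μ))⁻¹ • χ, contDiff_const.smul hχ, hχc.smul_left, ?_, ?_⟩
  · exact (closure_mono (Function.support_const_smul_subset _ _)).trans hχs
  · simp [mul_pow, integral_const_mul, Real.sq_sqrt hpos.le, hpos.ne']

variable (μ) in
theorem exists_seq_contDiff_integral_sq_eq_one :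
    ∃ ψ : ℕ → E → ℝ, (∀ k, ContDiff ℝ ∞ (ψ k)) ∧ (∀ k, HasCompactSupport (ψ k)) ∧
      (∀ k, ∫ x, ψ k x ^ 2 ∂μ = 1) ∧ Tendsto (fun k => tsupport (ψ k)) atTop (𝓝 0).smallSets := by
  obtain ⟨s, hs⟩ := (𝓝 (0 : E)).exists_antitone_basis
  choose ψ hψ hψc hψs hψ1 using fun k => exists_contDiff_integral_sq_eq_one μ (hs.mem k)
  exact ⟨ψ, hψ, hψc, hψ1, hs.tendsto_smallSets.smallSets_mono (.of_forall hψs)⟩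

theorem tendsto_sq_convolution {ι : Type*} {l : Filter ι} {ψ : ι → E → ℝ} {x : E}
    (hψ1 : ∀ k, ∫ x, ψ k x ^ 2 ∂μ = 1)
    (hψ0 : Tendsto (fun k => tsupport (ψ k)) l (𝓝 0).smallSets)
    (hf : AEStronglyMeasurable f μ) (hfx : ContinuousAt f x) :
    Tendsto (fun k => ((ψ k ^ 2 : E → ℝ) ⋆[lsmul ℝ ℝ, μ] f) x) l (𝓝 (f x)) := by
  refine convolution_tendsto_right (k := fun _ => x) (.of_forall fun k y => sq_nonneg _)
    (.of_forall hψ1) ?_ (.of_forall fun _ => hf) (hfx.tendsto.comp tendsto_snd) tendsto_const_nhds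
  exact hψ0.smallSets_mono <| .of_forall fun k =>
    (subset_tsupport _).trans (tsupport_sq_subset (ψ k))

theorem DistribSecondDerivLE.secondDiff_le_of_locallyIntegrable {Ω : Set E} {p v : E} {a : ℝ}
    (h : DistribSecondDerivLE μ Ω v f fun _ => a) (hf : LocallyIntegrable f μ) (hΩ : IsOpen Ω)
    (hfΩ : ContinuousOn f Ω) (hseg : segment ℝ (p - v) (p + v) ⊆ Ω) :
    secondDiff f p v ≤ a := by
  obtain ⟨ψ, hψ, hψc, hψ1, hψ0⟩ := exists_seq_contDiff_integral_sq_eq_one μ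
  obtain ⟨δ, hδ, hδΩ⟩ := (isCompact_segment (p - v) (p + v)).exists_thickening_subset_open hΩ hseg
  have hsmooth (k : ℕ) : ContDiff ℝ 2 ((ψ k ^ 2 : E → ℝ) ⋆[lsmul ℝ ℝ, μ] f) := by
    have hsq : ContDiff ℝ 2 (ψ k ^ 2) := contDiff_infty.1 ((hψ k).pow 2) 2
    exact (hasCompactSupport_sq (hψc k)).contDiff_convolution_left _ hsq hf
  have hmollified : ∀ᶠ k in atTop,
      secondDiff ((ψ k ^ 2 : E → ℝ) ⋆[lsmul ℝ ℝ, μ] f) p v ≤ a := by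
    filter_upwards [tendsto_smallSets_iff.1 hψ0 _ (Metric.ball_mem_nhds 0 hδ)] with k hk
    refine secondDiff_le_of_dirDeriv_dirDeriv_le (fun x _ => (hsmooth k).contDiffAt) fun x hx =>
      dirDeriv_dirDeriv_sq_convolution_le h hf (hψ k) (hψc k) (hψ1 k) fun y hy => ?_
    exact hδΩ (Metric.mem_thickening_iff.2 ⟨x, hx, by simpa using hk hy⟩)
  have hlim {x : E} (hx : x ∈ segment ℝ (p - v) (p + v)) :=
    tendsto_sq_convolution hψ1 hψ0 hf.aestronglyMeasurable
      (hfΩ.continuousAt (hΩ.mem_nhds (hseg hx)))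
  exact le_of_tendsto (((hlim (right_mem_segment ..)).add (hlim (left_mem_segment ..))).sub
    ((hlim (mem_segment_sub_add p v)).const_mul 2)) hmollified

theorem DistribSecondDerivLE.secondDiff_le {Ω : Set E} {p v : E} {a : ℝ}
    (h : DistribSecondDerivLE μ Ω v f fun _ => a) (hΩ : IsOpen Ω) (hf : ContinuousOn f Ω)
    (hseg : segment ℝ (p - v) (p + v) ⊆ Ω) : secondDiff f p v ≤ a := by
  obtain ⟨K, hK, hsegK, hKΩ⟩ := exists_compact_between (isCompact_segment (p - v) (p + v)) hΩ hseg
  have hfK : Set.EqOn f (K.indicator f) K := Set.eqOn_indicator.symm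
  have hint : Integrable (K.indicator f) μ :=
    (integrable_indicator_iff hK.measurableSet).2 ((hf.mono hKΩ).integrableOn_compact hK)
  have hcont : ContinuousOn (K.indicator f) (interior K) :=
    (hf.mono (interior_subset.trans hKΩ)).congr (hfK.symm.mono interior_subset)
  have hdist : DistribSecondDerivLE μ (interior K) v (K.indicator f) fun _ => a :=
    (h.mono_set (interior_subset.trans hKΩ)).congr_left (hfK.mono interior_subset)
  have hK_eq {x : E} (hx : x ∈ segment ℝ (p - v) (p + v)) := hfK (interior_subset (hsegK hx))
  have hle := hdist.secondDiff_le_of_locallyIntegrable hint.locallyIntegrable isOpen_interior hcont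
    hsegK
  rwa [secondDiff, ← hK_eq (right_mem_segment ..), ← hK_eq (left_mem_segment ..),
    ← hK_eq (mem_segment_sub_add p v)] at hle

theorem DistribSecondDerivLE.eventually_secondDiff_smul_le {Ω : Set E} {p v : E} {a : ℝ} {g : E → ℝ}
    (h : DistribSecondDerivLE μ Ω v f g) (hΩ : IsOpen Ω) (hf : ContinuousOn f Ω)
    (hg : ContinuousOn g Ω) (hp : p ∈ Ω) (ha : g p < a) :
    ∀ᶠ t in 𝓝 (0 : ℝ), secondDiff f p (t • v) ≤ a * t ^ 2 := by
  obtain ⟨r, hr, hrΩ⟩ : ∃ r > 0, ∀ ⦃x⦄, x ∈ Metric.ball p r → x ∈ Ω ∧ g x < a :=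
    Metric.nhds_basis_ball.eventually_iff.1 <| (hΩ.eventually_mem hp).and <|
      (hg.continuousAt (hΩ.mem_nhds hp)).eventually_lt_const ha
  have hsub : Metric.ball p r ⊆ Ω := fun x hx => (hrΩ hx).1
  have hball : DistribSecondDerivLE μ (Metric.ball p r) v f fun _ => a :=
    (h.mono_set hsub).mono_right
      ((hg.mono hsub).locallyIntegrableOn measurableSet_ball)
      (continuousOn_const.locallyIntegrableOn measurableSet_ball)
      fun x hx => (hrΩ hx).2.le
  have hline (c : ℝ) : ∀ᶠ t in 𝓝 (0 : ℝ), p + c • t • v ∈ Metric.ball p r :=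
    (Continuous.tendsto' (by fun_prop) _ _ (by simp)).eventually (Metric.ball_mem_nhds p hr)
  filter_upwards [hline 1, hline (-1)] with t hpos hneg
  rw [one_smul] at hpos
  rw [neg_one_smul, ← sub_eq_add_neg] at hneg
  have hle := (hball.smul t).secondDiff_le (a := t ^ 2 * a) Metric.isOpen_ball (hf.mono hsub)
    ((convex_ball p r).segment_subset hneg hpos)
  rwa [mul_comm] at hle

theorem DistribSecondDerivLE.dirDeriv_dirDeriv_le {Ω : Set E} {p v : E} {g h : E → ℝ}
    (hfg : DistribSecondDerivLE μ Ω v f g) (hΩ : IsOpen Ω) (hf : ContinuousOn f Ω)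
    (hg : ContinuousOn g Ω) (hp : p ∈ Ω) (hh : ContDiffAt ℝ 2 h p)
    (hhp : h p = f p) (hhf : ∀ᶠ x in 𝓝 p, h x ≤ f x) :
    dirDeriv v (dirDeriv v h) p ≤ g p := by
  refine le_of_forall_gt_imp_ge_of_dense fun a ha => ?_
  refine dirDeriv_dirDeriv_le_of_eventually_secondDiff_le hh ?_
  have hline (w : E) : ∀ᶠ t in 𝓝 (0 : ℝ), h (p + t • w) ≤ f (p + t • w) :=
    (Continuous.tendsto' (by fun_prop) _ _ (by simp)).eventually hhf
  filter_upwards [hfg.eventually_secondDiff_smul_le hΩ hf hg hp ha, hline v, hline (-v)]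
    with t ht hpos hneg
  simp only [secondDiff, smul_neg, ← sub_eq_add_neg] at ht hneg ⊢
  linarith

end Mollification

end Distributional

section Coordinates

variable {n : ℕ}

theorem sum_hess2_mul_mul {h : (Fin n → ℝ) → ℝ} {x : Fin n → ℝ} (hh : ContDiffAt ℝ 2 h x)
    (v : Fin n → ℝ) :
    ∑ i, ∑ j, hess2 h x i j * v i * v j = dirDeriv v (dirDeriv v h) x := by
  have hdiff : DifferentiableAt ℝ (fderiv ℝ h) x :=
    (hh.fderiv_right (m := 1) (by norm_num)).differentiableAt one_ne_zero
  have hsecond (w u : Fin n → ℝ) :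
      fderiv ℝ (fun y => fderiv ℝ h y w) x u = fderiv ℝ (fderiv ℝ h) x u w := by
    simp [fderiv_clm_apply hdiff (differentiableAt_const w)]
  calc
    ∑ i, ∑ j, hess2 h x i j * v i * v j
      = fderiv ℝ (fderiv ℝ h) x (∑ j, v j • Pi.single j 1) (∑ i, v i • Pi.single i 1) := by
        simp only [hess2, hsecond, map_sum, map_smul, _root_.sum_apply, _root_.smul_apply,
          smul_eq_mul, mul_sum]
        exact sum_congr rfl fun i _ => sum_congr rfl fun j _ => by ring
    _ = dirDeriv v (dirDeriv v h) x := by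
        rw [← pi_eq_sum_univ' v]
        exact (hsecond v v).symm

theorem hess2_const_smul (c : ℝ) (h : (Fin n → ℝ) → ℝ) (x : Fin n → ℝ) (i j : Fin n) :
    hess2 (c • h) x i j = c * hess2 h x i j := by
  change dirDeriv _ (dirDeriv _ (c • h)) x = c * dirDeriv _ (dirDeriv _ h) x
  simp [dirDeriv_const_smul]

theorem sum_hess2_smul_mul_smul {ψ : (Fin n → ℝ) → ℝ} (hψ : ContDiff ℝ 2 ψ) (v x : Fin n → ℝ) :
    ∑ i, ∑ j, hess2 (fun y => (ψ y • v) i * (ψ y • v) j) x i j =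
      dirDeriv v (dirDeriv v (ψ ^ 2)) x := by
  rw [← sum_hess2_mul_mul (h := ψ ^ 2) (hψ.pow 2).contDiffAt v]
  refine sum_congr rfl fun i _ => sum_congr rfl fun j _ => ?_
  have hentry : (fun y => (ψ y • v) i * (ψ y • v) j) = (v i * v j) • ψ ^ 2 := by
    ext y
    simp only [Pi.smul_apply, Pi.pow_apply, smul_eq_mul]
    ring
  rw [hentry, hess2_const_smul]
  ring

theorem distribSecondDerivLE_of_forall_vectorField {Ω : Set (Fin n → ℝ)} {f : (Fin n → ℝ) → ℝ}
    {A : (Fin n → ℝ) → Matrix (Fin n) (Fin n) ℝ}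
    (hdist : ∀ V : (Fin n → ℝ) → (Fin n → ℝ), ContDiff ℝ ∞ V → HasCompactSupport V →
      tsupport V ⊆ Ω →
      ∫ x in Ω, f x * ∑ i, ∑ j, hess2 (fun y => V y i * V y j) x i j ≤
        ∫ x in Ω, ∑ i, ∑ j, A x i j * V x i * V x j) (v : Fin n → ℝ) :
    DistribSecondDerivLE volume Ω v f fun x => ∑ i, ∑ j, A x i j * v i * v j := by
  intro ψ hψ hψc hψΩ
  have hVΩ : tsupport (fun x => ψ x • v) ⊆ Ω := (tsupport_smul_subset_left ψ _).trans hψΩ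
  have hA (x : Fin n → ℝ) : ∑ i, ∑ j, A x i j * (ψ x • v) i * (ψ x • v) j =
      (∑ i, ∑ j, A x i j * v i * v j) * ψ x ^ 2 := by
    simp only [sum_mul, Pi.smul_apply, smul_eq_mul]
    exact sum_congr rfl fun i _ => sum_congr rfl fun j _ => by ring
  have hle := hdist (fun x => ψ x • v) (hψ.smul contDiff_const) hψc.smul_right hVΩ
  simp_rw [sum_hess2_smul_mul_smul (contDiff_infty.1 hψ 2), hA] at hle
  rwa [setIntegral_eq_integral_of_forall_compl_eq_zero fun x hx => ?_,
    setIntegral_eq_integral_of_forall_compl_eq_zero fun x hx => ?_] at hle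
  · simp [image_eq_zero_of_notMem_tsupport fun hmem => hx (hψΩ hmem)]
  · rw [image_eq_zero_of_notMem_tsupport fun hmem =>
      hx (hψΩ (tsupport_dirDeriv_dirDeriv_sq_subset v ψ hmem)), mul_zero]

theorem distributional_implies_viscosity_hessian_general {Ω : Set (Fin n → ℝ)} (hΩ : IsOpen Ω)
    {f : (Fin n → ℝ) → ℝ} (hf : ContinuousOn f Ω)
    {A : (Fin n → ℝ) → Matrix (Fin n) (Fin n) ℝ}
    (hA : ∀ i j, ContinuousOn (fun x => A x i j) Ω)
    (hdist : ∀ V : (Fin n → ℝ) → (Fin n → ℝ), ContDiff ℝ ∞ V → HasCompactSupport V →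
      tsupport V ⊆ Ω →
      ∫ x in Ω, f x * ∑ i, ∑ j, hess2 (fun y => V y i * V y j) x i j ≤
        ∫ x in Ω, ∑ i, ∑ j, A x i j * V x i * V x j)
    {p : Fin n → ℝ} (hp : p ∈ Ω) {h : (Fin n → ℝ) → ℝ} (hh : ContDiffAt ℝ 2 h p)
    (hhp : h p = f p) (hhf : ∀ᶠ x in 𝓝 p, h x ≤ f x) (v : Fin n → ℝ) :
    0 ≤ ∑ i, ∑ j, (A p i j - hess2 h p i j) * v i * v j := by
  have hg : ContinuousOn (fun x => ∑ i, ∑ j, A x i j * v i * v j) Ω :=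
    continuousOn_finsetSum _ fun i _ => continuousOn_finsetSum _ fun j _ =>
      ((hA i j).mul continuousOn_const).mul continuousOn_const
  have hle := (distribSecondDerivLE_of_forall_vectorField hdist v).dirDeriv_dirDeriv_le
    hΩ hf hg hp hh hhp hhf
  simpa only [sub_mul, sum_sub_distrib, sum_hess2_mul_mul hh, sub_nonneg] using hle

end Coordinates

/-- If `Hess f ≤ A` holds on `Ω` in the distributional sense, then it holds at every
point of `Ω` in the viscosity sense. -/
theorem distributional_implies_viscosity_hessian {n : ℕ}
    (Ω : Set (Fin n → ℝ)) (hΩ : IsOpen Ω)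
    (f : (Fin n → ℝ) → ℝ) (hf : ContinuousOn f Ω)
    (A : (Fin n → ℝ) → Matrix (Fin n) (Fin n) ℝ)
    (hAsmooth : ∀ i j, ContDiffOn ℝ (⊤ : ℕ∞) (fun x => A x i j) Ω)
    (hAsymm : ∀ x ∈ Ω, ∀ i j, A x i j = A x j i)
    (hdist : ∀ V : (Fin n → ℝ) → (Fin n → ℝ), ContDiff ℝ (⊤ : ℕ∞) V → HasCompactSupport V →
      tsupport V ⊆ Ω →
      ∫ x in Ω, f x * ∑ i, ∑ j, hess2 (fun y => V y i * V y j) x i j ≤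
        ∫ x in Ω, ∑ i, ∑ j, A x i j * V x i * V x j) :
    ∀ p ∈ Ω, ∀ (U : Set (Fin n → ℝ)) (h : (Fin n → ℝ) → ℝ),
      IsOpen U → p ∈ U → U ⊆ Ω → ContDiffOn ℝ 2 h U → h p = f p →
      (∀ x ∈ U, h x ≤ f x) →
      ∀ v : Fin n → ℝ,
        0 ≤ ∑ i, ∑ j, (A p i j - hess2 h p i j) * v i * v j :=
  fun _ hp _ _ hU hpU _ hh hhp hhf => distributional_implies_viscosity_hessian_general hΩ hf
    (fun i j => (hAsmooth i j).continuousOn) hdist hp (hh.contDiffAt (hU.mem_nhds hpU)) hhp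
    (eventually_of_mem (hU.mem_nhds hpU) hhf)
end
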